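/- arXiv:1605.05965 — 2 statements merged into one kernel-verified Lean document; each statement's English description precedes it below -/
import Mathlib

section
/- Let s > 0, x ∈ ℝ², let S ⊆ ℝ² be nonempty, and let ω ⊂ ℝ² be a finite configuration. Suppose (x₀, x₁, …, x_{N+1}) is a minimizer for A^s_ω(x, S), with length L. Let z ∈ ℝ² with z ∉ ω, and suppose there is an index i ∈ {0, …, N} and r ≥ 0 with |z − x_i| ≤ r. If (2rL + 2r²)/s ≤ 1/2, then A^s_{ω∪{z}}(x, S) ≤ A^s_ω(x, S) − 1/2. -/
/-!
Visit `z` right after `x_i`. By the triangle inequality the path grows in length by at most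
`2 |z - x_i| ≤ 2r`, while one more point is collected, so the new action is at most
`(L + 2r)² / (2s) - (N + 1) = (L² / (2s) - N) + (2rL + 2r²) / s - 1`. No sequence visits more
points than the configuration contains, so the actions are bounded below and the new infimum is
at most the action of this competitor.
-/

noncomputable section

/-- Points of the plane. -/
abbrev Pt := EuclideanSpace ℝ (Fin 2)

noncomputable instance : DecidableEq Pt := Classical.decEq _

/-- An admissible sequence for the configuration `cfg`, start `x` and target set `S`:
`p 0 = x`, `p (N+1) ∈ S`, and the interior points `p 1, …, p N` are pairwise distinct
points of `cfg`. -/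
def IsAdmissible (cfg : Finset Pt) (x : Pt) (S : Set Pt) (N : ℕ)
    (p : Fin (N + 2) → Pt) : Prop :=
  p 0 = x ∧ p (Fin.last (N + 1)) ∈ S ∧
    (∀ i : Fin (N + 2), i ≠ 0 → i ≠ Fin.last (N + 1) → p i ∈ cfg) ∧
    (∀ i j : Fin (N + 2), i ≠ 0 → i ≠ Fin.last (N + 1) → j ≠ 0 → j ≠ Fin.last (N + 1) →
      i ≠ j → p i ≠ p j)

/-- The length `L` of the polygonal path through `p 0, …, p (N+1)`. -/
def pathLength (N : ℕ) (p : Fin (N + 2) → Pt) : ℝ :=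
  ∑ i : Fin (N + 1), ‖p i.succ - p i.castSucc‖

/-- The action `L²/(2s) − N` of an admissible sequence. -/
def pathAction (s : ℝ) (N : ℕ) (p : Fin (N + 2) → Pt) : ℝ :=
  pathLength N p ^ 2 / (2 * s) - N

/-- The action `A^s_ω(x, S)`: the infimum of the action over admissible sequences. -/
def actionInf (cfg : Finset Pt) (s : ℝ) (x : Pt) (S : Set Pt) : ℝ :=
  sInf {a : ℝ | ∃ (N : ℕ) (p : Fin (N + 2) → Pt), IsAdmissible cfg x S N p ∧
    a = pathAction s N p}

section Tuples

variable {α : Type*} {n : ℕ}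

lemma injective_insertNth_iff {i : Fin (n + 1)} {z : α} {p : Fin n → α} :
    Function.Injective (i.insertNth z p : Fin (n + 1) → α) ↔
      z ∉ Set.range p ∧ Function.Injective p := by
  rw [← Equiv.injective_comp i.cycleRange.symm, Fin.insertNth_comp_cycleRange_symm,
    Fin.cons_injective_iff]

/-- The intermediate points `x₁, …, x_N` of a sequence `(x₀, …, x_{N+1})`, reindexed from `0`;
these are the points that an admissible sequence collects from the configuration. -/
def interiorPoints (p : Fin (n + 2) → α) : Fin n → α :=
  fun j ↦ p j.castSucc.succ

lemma interiorPoints_insertNth (p : Fin (n + 2) → α) (i : Fin (n + 1)) (z : α) :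
    interiorPoints (i.castSucc.succ.insertNth z p) = i.insertNth z (interiorPoints p) := by
  rw [Fin.eq_insertNth_iff]
  refine ⟨Fin.insertNth_apply_same .., funext fun j ↦ ?_⟩
  rw [Fin.removeNth, interiorPoints, ← Fin.castSucc_succAbove_castSucc, ← Fin.succ_succAbove_succ,
    Fin.insertNth_apply_succAbove, interiorPoints]

lemma succAbove_succ_eq_succAbove_castSucc {i j : Fin n} (h : j ≠ i) :
    i.succ.succAbove j = i.castSucc.succAbove j := by
  rcases h.lt_or_gt with h | h
  · rw [Fin.succAbove_succ_of_le _ _ h.le, Fin.succAbove_castSucc_of_lt _ _ h]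
  · rw [Fin.succAbove_succ_of_lt _ _ h, Fin.succAbove_castSucc_of_le _ _ h.le]

lemma forall_ne_zero_ne_last_iff {P : Fin (n + 2) → Prop} :
    (∀ i, i ≠ 0 → i ≠ Fin.last (n + 1) → P i) ↔ ∀ j : Fin n, P j.castSucc.succ := by
  rw [Fin.forall_fin_succ, Fin.forall_fin_succ']
  simp [-Fin.castSucc_succ, ← Fin.succ_last, Fin.castSucc_ne_last]

-- The edge that is broken up is added on the left, so that no subtraction occurs.
lemma sum_consecutive_insertNth {M : Type*} [AddCommMonoid M] (f : α → α → M)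
    (p : Fin (n + 2) → α) (i : Fin (n + 1)) (z : α) :
    let q : Fin (n + 3) → α := i.castSucc.succ.insertNth z p
    ∑ j : Fin (n + 2), f (q j.castSucc) (q j.succ) + f (p i.castSucc) (p i.succ) =
      ∑ j : Fin (n + 1), f (p j.castSucc) (p j.succ) + (f (p i.castSucc) z + f z (p i.succ)) := by
  intro q
  have start_eq : q i.castSucc.castSucc = p i.castSucc := by
    rw [← Fin.succAbove_succ_self]
    exact Fin.insertNth_apply_succAbove ..
  have inserted_eq : q i.castSucc.succ = z := Fin.insertNth_apply_same ..
  have inserted_eq' : q (i.castSucc.succAbove i).castSucc = z := by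
    rw [Fin.succAbove_castSucc_self]
    exact inserted_eq
  have succ_eq (j : Fin (n + 1)) : q (i.castSucc.succAbove j).succ = p j.succ := by
    rw [← Fin.succ_succAbove_succ]
    exact Fin.insertNth_apply_succAbove ..
  have castSucc_eq (j : Fin n) :
      q (i.castSucc.succAbove (i.succAbove j)).castSucc = p (i.succAbove j).castSucc := by
    rw [← succAbove_succ_eq_succAbove_castSucc (i.succAbove_ne j),
      ← Fin.castSucc_succAbove_castSucc]
    exact Fin.insertNth_apply_succAbove ..
  rw [Fin.sum_univ_succAbove _ i.castSucc, Fin.sum_univ_succAbove _ i,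
    Fin.sum_univ_succAbove (fun j : Fin (n + 1) ↦ f (p j.castSucc) (p j.succ)) i]
  simp only [start_eq, inserted_eq, inserted_eq', succ_eq, castSucc_eq]
  abel

lemma sum_dist_insertNth_le [PseudoMetricSpace α] (p : Fin (n + 2) → α) (i : Fin (n + 1)) (z : α) :
    let q : Fin (n + 3) → α := i.castSucc.succ.insertNth z p
    ∑ j : Fin (n + 2), dist (q j.castSucc) (q j.succ) ≤
      ∑ j : Fin (n + 1), dist (p j.castSucc) (p j.succ) + 2 * dist z (p i.castSucc) := by
  intro q
  have hsum := sum_consecutive_insertNth dist p i z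
  have htri := dist_triangle z (p i.castSucc) (p i.succ)
  rw [dist_comm (p i.castSucc) z] at hsum
  linarith

end Tuples

section Action

variable {cfg : Finset Pt} {x z : Pt} {S : Set Pt} {N : ℕ} {p : Fin (N + 2) → Pt} {s r : ℝ}

lemma pathLength_eq_sum_dist (N : ℕ) (p : Fin (N + 2) → Pt) :
    pathLength N p = ∑ j : Fin (N + 1), dist (p j.castSucc) (p j.succ) := by
  simp only [pathLength, dist_eq_norm']

lemma pathLength_nonneg (N : ℕ) (p : Fin (N + 2) → Pt) : 0 ≤ pathLength N p :=
  Finset.sum_nonneg fun _ _ ↦ norm_nonneg _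

lemma pathLength_insertNth_le {i : Fin (N + 1)} (hzi : ‖z - p i.castSucc‖ ≤ r) :
    pathLength (N + 1) (i.castSucc.succ.insertNth z p) ≤ pathLength N p + 2 * r := by
  rw [pathLength_eq_sum_dist, pathLength_eq_sum_dist]
  rw [← dist_eq_norm] at hzi
  exact (sum_dist_insertNth_le p i z).trans (by gcongr)

lemma pathAction_insertNth_le (hs : 0 ≤ s) {i : Fin (N + 1)} (hzi : ‖z - p i.castSucc‖ ≤ r) :
    pathAction s (N + 1) (i.castSucc.succ.insertNth z p) ≤
      pathAction s N p + (2 * r * pathLength N p + 2 * r ^ 2) / s - 1 := by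
  have hsq : pathLength (N + 1) (i.castSucc.succ.insertNth z p) ^ 2 / (2 * s) ≤
      (pathLength N p + 2 * r) ^ 2 / (2 * s) := by
    gcongr
    · exact pathLength_nonneg ..
    · exact pathLength_insertNth_le hzi
  calc pathAction s (N + 1) (i.castSucc.succ.insertNth z p)
      ≤ (pathLength N p + 2 * r) ^ 2 / (2 * s) - (N + 1 : ℕ) := sub_le_sub_right hsq _
    _ = pathAction s N p + (2 * r * pathLength N p + 2 * r ^ 2) / s - 1 := by
      unfold pathAction
      push_cast
      ring

lemma isAdmissible_iff : IsAdmissible cfg x S N p ↔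
    p 0 = x ∧ p (Fin.last (N + 1)) ∈ S ∧ (∀ j, interiorPoints p j ∈ cfg) ∧
      Function.Injective (interiorPoints p) := by
  have hinj : (∀ i j : Fin (N + 2), i ≠ 0 → i ≠ Fin.last (N + 1) → j ≠ 0 →
      j ≠ Fin.last (N + 1) → i ≠ j → p i ≠ p j) ↔
      ∀ i, i ≠ 0 → i ≠ Fin.last (N + 1) → ∀ j, j ≠ 0 → j ≠ Fin.last (N + 1) → i ≠ j → p i ≠ p j :=
    ⟨fun h i hi hi' j ↦ h i j hi hi', fun h i j hi hi' ↦ h i hi hi' j⟩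
  simp only [IsAdmissible, hinj, forall_ne_zero_ne_last_iff]
  simp only [Function.Injective, interiorPoints, ne_eq, not_imp_not, Fin.succ_inj, Fin.castSucc_inj]

namespace IsAdmissible

lemma insertNth (hp : IsAdmissible cfg x S N p) (hz : z ∉ cfg) (i : Fin (N + 1)) :
    IsAdmissible (insert z cfg) x S (N + 1) (i.castSucc.succ.insertNth z p) := by
  rw [isAdmissible_iff] at hp ⊢
  obtain ⟨hstart, hend, hmem, hinj⟩ := hp
  refine ⟨?_, ?_, ?_, ?_⟩
  · rw [← Fin.succAbove_ne_zero_zero (Fin.succ_ne_zero i.castSucc), Fin.insertNth_apply_succAbove,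
      hstart]
  · rw [← Fin.succAbove_ne_last_last (a := i.castSucc.succ) (Fin.castSucc_ne_last i.succ),
      Fin.insertNth_apply_succAbove]
    exact hend
  · rw [interiorPoints_insertNth, Fin.forall_iff_succAbove i]
    simp [hmem]
  · rw [interiorPoints_insertNth, injective_insertNth_iff]
    exact ⟨fun ⟨j, hj⟩ ↦ hz (hj ▸ hmem j), hinj⟩

lemma le_card (hp : IsAdmissible cfg x S N p) : N ≤ cfg.card := by
  obtain ⟨-, -, hmem, hinj⟩ := isAdmissible_iff.mp hp
  simpa using Finset.card_le_card_of_injOn (s := Finset.univ) _ (fun j _ ↦ hmem j) hinj.injOn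

lemma neg_card_le_pathAction (hp : IsAdmissible cfg x S N p) (hs : 0 ≤ s) :
    -(cfg.card : ℝ) ≤ pathAction s N p := by
  have hcard : (N : ℝ) ≤ cfg.card := mod_cast hp.le_card
  have hsq : 0 ≤ pathLength N p ^ 2 / (2 * s) := by positivity
  unfold pathAction
  linarith

lemma actionInf_le_pathAction (hp : IsAdmissible cfg x S N p) (hs : 0 ≤ s) :
    actionInf cfg s x S ≤ pathAction s N p := by
  refine csInf_le ⟨-(cfg.card : ℝ), ?_⟩ ⟨N, p, hp, rfl⟩
  rintro _ ⟨M, q, hq, rfl⟩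
  exact hq.neg_card_le_pathAction hs

end IsAdmissible

theorem action_decrease_of_nearby_point_general (hs : 0 < s) (hp : IsAdmissible cfg x S N p)
    (hz : z ∉ cfg) {i : Fin (N + 1)} (hzi : ‖z - p i.castSucc‖ ≤ r) :
    actionInf (insert z cfg) s x S ≤
      pathAction s N p + (2 * r * pathLength N p + 2 * r ^ 2) / s - 1 :=
  ((hp.insertNth hz i).actionInf_le_pathAction hs.le).trans (pathAction_insertNth_le hs.le hzi)

end Action

/-- If a new point `z ∉ ω` is within distance `r` of a point `x_i`,
`i ∈ {0, …, N}`, visited by a minimizer of length `L`, and `(2rL + 2r²)/s ≤ 1/2`,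
then inserting `z` into the configuration decreases the optimal action by at least `1/2`. -/
theorem action_decrease_of_nearby_point (s : ℝ) (hs : 0 < s) (x : Pt) (S : Set Pt)
    (hS : S.Nonempty) (cfg : Finset Pt) (N : ℕ) (p : Fin (N + 2) → Pt)
    (hadm : IsAdmissible cfg x S N p)
    (hmin : pathAction s N p = actionInf cfg s x S)
    (z : Pt) (hz : z ∉ cfg) (r : ℝ) (hr : 0 ≤ r)
    (hclose : ∃ i : Fin (N + 1), ‖z - p i.castSucc‖ ≤ r)
    (hsmall : (2 * r * pathLength N p + 2 * r ^ 2) / s ≤ 1 / 2) :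
    actionInf (insert z cfg) s x S ≤ actionInf cfg s x S - 1 / 2 := by
  obtain ⟨i, hi⟩ := hclose
  linarith [action_decrease_of_nearby_point_general hs hadm hz hi]
end
end

section
/- Let s > 0, x ∈ ℝ², let S ⊆ ℝ² be nonempty, and let ω ⊂ ℝ² be a finite configuration. Suppose (x₀, x₁, …, x_{N+1}) is a minimizer for A^s_ω(x, S), with length L. Let z ∈ ω with z ∉ {x₁, …, x_N}, let i ∈ {0, …, N}, and suppose the orthogonal projection z* of z onto the line through x_i and x_{i+1} lies on the closed segment between x_i and x_{i+1}, with s₁ = |x_i − z*| > 0 and s₂ = |x_{i+1} − z*| > 0, and set h = |z − z*|. Then, with B = (h²/2)·(1/s₁ + 1/s₂), one has 2·L·B + B² ≥ 2s. -/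
/-!
Inserting the unvisited point `z` between `x_i` and `x_{i+1}` gives another admissible sequence,
with one more interior point and with length at most `L + B`, by Pythagoras and
`√(a² + h²) ≤ a + h²/(2a)` on each side of `z*`. By minimality
`L²/(2s) - N ≤ (L + B)²/(2s) - (N + 1)`, which rearranges to `2s ≤ 2LB + B²`. For finite `ω` the
action is at least `-|ω|`, so that the real infimum `A^s_ω(x, S)` is a genuine lower bound.
-/

open scoped RealInnerProductSpace

noncomputable section

section Insertion

variable {α : Type*} {n : ℕ}

theorem Ioo_zero_last_eq_insert_image_succAbove {j : Fin (n + 3)}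
    (hj : j ∈ Set.Ioo 0 (Fin.last (n + 2))) :
    Set.Ioo 0 (Fin.last (n + 2)) = insert j (j.succAbove '' Set.Ioo 0 (Fin.last (n + 1))) := by
  ext k
  obtain rfl | ⟨m, rfl⟩ := Fin.eq_self_or_eq_succAbove j k
  · simp [hj]
  · rw [Set.mem_insert_iff, or_iff_right (Fin.succAbove_ne j m),
      Fin.succAbove_right_injective.mem_set_image]
    simp only [Set.mem_Ioo, Fin.pos_iff_ne_zero, Fin.lt_last_iff_ne_last, ne_eq,
      Fin.succAbove_eq_zero_iff hj.1.ne', Fin.succAbove_eq_last_iff hj.2.ne]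

theorem succ_succAbove_eq_castSucc_succAbove {i k : Fin (n + 1)} (h : k ≠ i) :
    i.succ.succAbove k = i.castSucc.succAbove k := by
  obtain h | h := h.lt_or_gt
  · rw [Fin.succAbove_succ_of_le _ _ h.le, Fin.succAbove_castSucc_of_lt _ _ h]
  · rw [Fin.succAbove_succ_of_lt _ _ h, Fin.succAbove_castSucc_of_le _ _ h.le]

/-- The sequence `p` with `z` inserted between its consecutive entries `p i.castSucc` and
`p i.succ`; the new entry has index `i.succ.castSucc`, which is also `i.castSucc.succ`. -/
def insertBetween (p : Fin (n + 2) → α) (i : Fin (n + 1)) (z : α) : Fin (n + 3) → α :=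
  i.succ.castSucc.insertNth z p

variable (p : Fin (n + 2) → α) (i : Fin (n + 1)) (z : α)

theorem insertBetween_self : insertBetween p i z i.succ.castSucc = z :=
  Fin.insertNth_apply_same ..

theorem insertBetween_succAbove (k : Fin (n + 2)) :
    insertBetween p i z (i.succ.castSucc.succAbove k) = p k :=
  Fin.insertNth_apply_succAbove ..

theorem insertBetween_castSucc_succAbove (k : Fin (n + 1)) :
    insertBetween p i z (i.succ.succAbove k).castSucc = p k.castSucc := by
  rw [← Fin.castSucc_succAbove_castSucc, insertBetween_succAbove]

theorem insertBetween_succ_succAbove (k : Fin (n + 1)) :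
    insertBetween p i z (i.castSucc.succAbove k).succ = p k.succ := by
  rw [← Fin.succ_succAbove_succ, Fin.succ_castSucc, insertBetween_succAbove]

theorem insertBetween_zero : insertBetween p i z 0 = p 0 := by
  simpa using insertBetween_castSucc_succAbove p i z 0

theorem insertBetween_last :
    insertBetween p i z (Fin.last (n + 2)) = p (Fin.last (n + 1)) := by
  simpa using insertBetween_succ_succAbove p i z (Fin.last n)

theorem succ_castSucc_mem_Ioo : i.succ.castSucc ∈ Set.Ioo 0 (Fin.last (n + 2)) :=
  ⟨Fin.succ_pos i.castSucc, Fin.castSucc_lt_last _⟩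

theorem image_insertBetween_succAbove (t : Set (Fin (n + 2))) :
    insertBetween p i z '' (i.succ.castSucc.succAbove '' t) = p '' t := by
  simp_rw [Set.image_image, insertBetween_succAbove]

theorem image_insertBetween_Ioo :
    insertBetween p i z '' Set.Ioo 0 (Fin.last (n + 2)) =
      insert z (p '' Set.Ioo 0 (Fin.last (n + 1))) := by
  rw [Ioo_zero_last_eq_insert_image_succAbove (succ_castSucc_mem_Ioo i), Set.image_insert_eq,
    insertBetween_self, image_insertBetween_succAbove]

theorem injOn_insertBetween {p : Fin (n + 2) → α} {z : α}
    (hp : Set.InjOn p (Set.Ioo 0 (Fin.last (n + 1))))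
    (hz : z ∉ p '' Set.Ioo 0 (Fin.last (n + 1))) :
    Set.InjOn (insertBetween p i z) (Set.Ioo 0 (Fin.last (n + 2))) := by
  have h_new : i.succ.castSucc ∉ i.succ.castSucc.succAbove '' Set.Ioo 0 (Fin.last (n + 1)) := by
    rintro ⟨k, -, hk⟩
    exact Fin.succAbove_ne _ _ hk
  rw [Ioo_zero_last_eq_insert_image_succAbove (succ_castSucc_mem_Ioo i), Set.injOn_insert h_new,
    insertBetween_self, image_insertBetween_succAbove]
  refine ⟨Set.InjOn.image_of_comp ?_, hz⟩
  rwa [insertBetween, Fin.insertNth_comp_succAbove]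

theorem sum_consecutive_insertBetween_add {M : Type*} [AddCommMonoid M] (f : α → α → M) :
    ∑ k : Fin (n + 2), f (insertBetween p i z k.castSucc) (insertBetween p i z k.succ) +
        f (p i.castSucc) (p i.succ) =
      ∑ k : Fin (n + 1), f (p k.castSucc) (p k.succ) + (f (p i.castSucc) z + f z (p i.succ)) := by
  have h_before : insertBetween p i z i.castSucc.succ = z := insertBetween_self p i z
  have h_after : insertBetween p i z i.succ.succ = p i.succ := by
    simpa using insertBetween_succ_succAbove p i z i
  have h_other (k : Fin n) :
      insertBetween p i z (i.succ.succAbove (i.succAbove k)).succ = p (i.succAbove k).succ := by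
    rw [succ_succAbove_eq_castSucc_succAbove (Fin.succAbove_ne i k),
      insertBetween_succ_succAbove]
  rw [Fin.sum_univ_succAbove _ i.succ]
  simp_rw [insertBetween_castSucc_succAbove, insertBetween_self, h_after]
  rw [Fin.sum_univ_succAbove _ i, Fin.sum_univ_succAbove (fun k ↦ f (p k.castSucc) (p k.succ)) i,
    Fin.succAbove_succ_self, h_before]
  simp_rw [h_other]
  abel

end Insertion

section Detour

theorem sqrt_sq_add_sq_le {a : ℝ} (ha : 0 < a) (h : ℝ) :
    √(a ^ 2 + h ^ 2) ≤ a + h ^ 2 / 2 * (1 / a) := by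
  refine Real.sqrt_le_iff.2 ⟨by positivity, ?_⟩
  calc a ^ 2 + h ^ 2 ≤ a ^ 2 + h ^ 2 + (h ^ 2 / 2 * (1 / a)) ^ 2 :=
        le_add_of_nonneg_right (sq_nonneg _)
    _ = (a + h ^ 2 / 2 * (1 / a)) ^ 2 := by field_simp; ring

variable {E : Type*} [SeminormedAddCommGroup E] [InnerProductSpace ℝ E]

theorem norm_sub_le_of_inner_eq_zero {u v : E} (huv : ⟪u, v⟫ = (0 : ℝ)) (hv : 0 < ‖v‖) :
    ‖u - v‖ ≤ ‖v‖ + ‖u‖ ^ 2 / 2 * (1 / ‖v‖) := by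
  rw [norm_sub_eq_sqrt_iff_real_inner_eq_zero.2 huv, ← sq, ← sq, add_comm]
  exact sqrt_sq_add_sq_le hv ‖u‖

theorem inner_sub_eq_zero_of_mem_segment {a b w v : E} (hw : w ∈ segment ℝ a b)
    (hv : ⟪v, b - a⟫ = (0 : ℝ)) : ⟪v, a - w⟫ = (0 : ℝ) ∧ ⟪v, b - w⟫ = (0 : ℝ) := by
  rw [segment_eq_image'] at hw
  obtain ⟨t, -, rfl⟩ := hw
  have ha : a - (a + t • (b - a)) = (-t) • (b - a) := by module
  have hb : b - (a + t • (b - a)) = (1 - t) • (b - a) := by module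
  simp only [ha, hb, inner_smul_right, hv, mul_zero, and_self]

theorem norm_sub_add_norm_sub_le_of_mem_segment {a b w z : E} (hw : w ∈ segment ℝ a b)
    (hzw : ⟪z - w, b - a⟫ = (0 : ℝ)) (ha : 0 < ‖a - w‖) (hb : 0 < ‖b - w‖) :
    ‖z - a‖ + ‖b - z‖ ≤ ‖b - a‖ + ‖z - w‖ ^ 2 / 2 * (1 / ‖a - w‖ + 1 / ‖b - w‖) := by
  obtain ⟨hza, hzb⟩ := inner_sub_eq_zero_of_mem_segment hw hzw
  have h_left := norm_sub_le_of_inner_eq_zero hza ha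
  have h_right := norm_sub_le_of_inner_eq_zero hzb hb
  have h_split : ‖a - w‖ + ‖b - w‖ = ‖b - a‖ := by
    simpa only [dist_eq_norm, norm_sub_rev w b, norm_sub_rev a b] using
      dist_add_dist_of_mem_segment hw
  rw [sub_sub_sub_cancel_right] at h_left h_right
  rw [norm_sub_rev b z]
  linarith

end Detour

/-- `p` is an admissible sequence for the configuration `ω`, start `x` and target set `S`, as in
`IsAdmissible` but in an arbitrary type and for a possibly infinite `ω`. The interior indices form
the open interval `Set.Ioo 0 (Fin.last (N + 1))`. -/
structure IsAdmissibleSeq {α : Type*} (ω : Set α) (x : α) (S : Set α) {N : ℕ}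
    (p : Fin (N + 2) → α) : Prop where
  map_zero : p 0 = x
  map_last_mem : p (Fin.last (N + 1)) ∈ S
  mapsTo : Set.MapsTo p (Set.Ioo 0 (Fin.last (N + 1))) ω
  injOn : Set.InjOn p (Set.Ioo 0 (Fin.last (N + 1)))

namespace IsAdmissibleSeq

variable {α : Type*} {ω S : Set α} {x z : α} {N : ℕ} {p : Fin (N + 2) → α}

theorem insertBetween (hp : IsAdmissibleSeq ω x S p) (hz : z ∈ ω)
    (hzp : z ∉ p '' Set.Ioo 0 (Fin.last (N + 1))) (i : Fin (N + 1)) :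
    IsAdmissibleSeq ω x S (insertBetween p i z) where
  map_zero := (insertBetween_zero p i z).trans hp.map_zero
  map_last_mem := (insertBetween_last p i z).symm ▸ hp.map_last_mem
  mapsTo := by
    rw [Set.mapsTo_iff_image_subset, image_insertBetween_Ioo]
    exact Set.insert_subset hz hp.mapsTo.image_subset
  injOn := injOn_insertBetween i hp.injOn hzp

theorem le_ncard (hp : IsAdmissibleSeq ω x S p) (hω : ω.Finite) : N ≤ ω.ncard := by
  have h_interior : (Set.Ioo 0 (Fin.last (N + 1))).ncard = N := by
    simp [Set.ncard_eq_toFinset_card']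
  calc N = (p '' Set.Ioo 0 (Fin.last (N + 1))).ncard := by rw [hp.injOn.ncard_image, h_interior]
    _ ≤ ω.ncard := Set.ncard_le_ncard hp.mapsTo.image_subset hω

end IsAdmissibleSeq

section Action

variable {E : Type*} [SeminormedAddCommGroup E]

/-- The length of the polygonal path through `p`: `pathLength` in an arbitrary seminormed group. -/
def polygonalLength {N : ℕ} (p : Fin (N + 2) → E) : ℝ :=
  ∑ i : Fin (N + 1), ‖p i.succ - p i.castSucc‖

/-- The action `L²/(2s) - N` of `p`: `pathAction` in an arbitrary seminormed group. -/
def polygonalAction (s : ℝ) {N : ℕ} (p : Fin (N + 2) → E) : ℝ :=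
  polygonalLength p ^ 2 / (2 * s) - N

/-- `p` is a minimizer for `A^s_ω(x, S)`. Minimality is stated by comparison with every competitor
because, for infinite `ω`, the real infimum is the junk value `0` once the actions are unbounded
below. -/
structure IsActionMinimizer (ω : Set E) (s : ℝ) (x : E) (S : Set E) {N : ℕ}
    (p : Fin (N + 2) → E) : Prop where
  isAdmissibleSeq : IsAdmissibleSeq ω x S p
  action_le {M : ℕ} {q : Fin (M + 2) → E} (hq : IsAdmissibleSeq ω x S q) :
    polygonalAction s p ≤ polygonalAction s q

variable {ω S : Set E} {s : ℝ} {x z : E} {N : ℕ} {p : Fin (N + 2) → E}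

theorem polygonalLength_nonneg (p : Fin (N + 2) → E) : 0 ≤ polygonalLength p :=
  Finset.sum_nonneg fun _ _ ↦ norm_nonneg _

theorem polygonalLength_insertBetween_add (p : Fin (N + 2) → E) (i : Fin (N + 1)) (z : E) :
    polygonalLength (insertBetween p i z) + ‖p i.succ - p i.castSucc‖ =
      polygonalLength p + (‖z - p i.castSucc‖ + ‖p i.succ - z‖) :=
  sum_consecutive_insertBetween_add p i z fun a b ↦ ‖b - a‖

theorem IsAdmissibleSeq.neg_ncard_le_polygonalAction (hp : IsAdmissibleSeq ω x S p)
    (hω : ω.Finite) (hs : 0 ≤ s) : -(ω.ncard : ℝ) ≤ polygonalAction s p := by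
  have h_visits : (N : ℝ) ≤ ω.ncard := mod_cast hp.le_ncard hω
  have h_kinetic : 0 ≤ polygonalLength p ^ 2 / (2 * s) := by positivity
  rw [polygonalAction]
  linarith

theorem IsActionMinimizer.two_mul_le_of_detour_le (hp : IsActionMinimizer ω s x S p)
    (hs : 0 < s) (hz : z ∈ ω) (hzp : z ∉ p '' Set.Ioo 0 (Fin.last (N + 1)))
    {i : Fin (N + 1)} {B : ℝ}
    (hB : ‖z - p i.castSucc‖ + ‖p i.succ - z‖ ≤ ‖p i.succ - p i.castSucc‖ + B) :
    2 * s ≤ 2 * polygonalLength p * B + B ^ 2 := by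
  set L := polygonalLength p
  set L' := polygonalLength (insertBetween p i z)
  have h_length : L' ≤ L + B := by linarith [polygonalLength_insertBetween_add p i z]
  have h_action : L ^ 2 / (2 * s) - N ≤ L' ^ 2 / (2 * s) - (N + 1 : ℕ) :=
    hp.action_le (hp.isAdmissibleSeq.insertBetween hz hzp i)
  have h_kinetic : 1 ≤ (L' ^ 2 - L ^ 2) / (2 * s) := by
    rw [sub_div]
    push_cast at h_action
    linarith
  calc 2 * s ≤ L' ^ 2 - L ^ 2 := (one_le_div (by positivity)).1 h_kinetic
    _ ≤ (L + B) ^ 2 - L ^ 2 := by gcongr; exact polygonalLength_nonneg _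
    _ = 2 * L * B + B ^ 2 := by ring

end Action

theorem minimizer_no_nearby_unvisited_point_general {E : Type*} [SeminormedAddCommGroup E]
    [InnerProductSpace ℝ E] {ω S : Set E} {s : ℝ} {x z zstar : E} {N : ℕ} {p : Fin (N + 2) → E}
    (hs : 0 < s) (hp : IsActionMinimizer ω s x S p) (hz : z ∈ ω)
    (hzp : z ∉ p '' Set.Ioo 0 (Fin.last (N + 1))) {i : Fin (N + 1)}
    (hseg : zstar ∈ segment ℝ (p i.castSucc) (p i.succ))
    (horth : ⟪z - zstar, p i.succ - p i.castSucc⟫ = (0 : ℝ))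
    (hs₁ : 0 < ‖p i.castSucc - zstar‖) (hs₂ : 0 < ‖p i.succ - zstar‖) :
    2 * s ≤ 2 * polygonalLength p *
        (‖z - zstar‖ ^ 2 / 2 * (1 / ‖p i.castSucc - zstar‖ + 1 / ‖p i.succ - zstar‖)) +
        (‖z - zstar‖ ^ 2 / 2 * (1 / ‖p i.castSucc - zstar‖ + 1 / ‖p i.succ - zstar‖)) ^ 2 :=
  hp.two_mul_le_of_detour_le hs hz hzp
    (norm_sub_add_norm_sub_le_of_mem_segment hseg horth hs₁ hs₂)

section Plane

variable {cfg : Finset Pt} {s : ℝ} {x : Pt} {S : Set Pt} {N : ℕ} {p : Fin (N + 2) → Pt}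

theorem isAdmissible_iff_isAdmissibleSeq :
    IsAdmissible cfg x S N p ↔ IsAdmissibleSeq (cfg : Set Pt) x S p := by
  constructor
  · rintro ⟨h_zero, h_last, h_mem, h_ne⟩
    refine ⟨h_zero, h_last, fun i hi ↦ h_mem i hi.1.ne' hi.2.ne, fun i hi j hj hij ↦ ?_⟩
    by_contra h
    exact h_ne i j hi.1.ne' hi.2.ne hj.1.ne' hj.2.ne h hij
  · intro h
    have mem_Ioo {i : Fin (N + 2)} (h₀ : i ≠ 0) (h₁ : i ≠ Fin.last (N + 1)) :
        i ∈ Set.Ioo 0 (Fin.last (N + 1)) :=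
      ⟨Fin.pos_iff_ne_zero.2 h₀, Fin.lt_last_iff_ne_last.2 h₁⟩
    exact ⟨h.map_zero, h.map_last_mem, fun i h₀ h₁ ↦ h.mapsTo (mem_Ioo h₀ h₁),
      fun i j hi₀ hi₁ hj₀ hj₁ ↦ h.injOn.ne (mem_Ioo hi₀ hi₁) (mem_Ioo hj₀ hj₁)⟩

theorem actionInf_le_pathAction (hs : 0 ≤ s) (hp : IsAdmissible cfg x S N p) :
    actionInf cfg s x S ≤ pathAction s N p := by
  refine csInf_le ⟨-((cfg : Set Pt).ncard : ℝ), ?_⟩ ⟨N, p, hp, rfl⟩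
  rintro _ ⟨M, q, hq, rfl⟩
  exact (isAdmissible_iff_isAdmissibleSeq.1 hq).neg_ncard_le_polygonalAction
    cfg.finite_toSet hs

theorem isActionMinimizer_of_pathAction_eq_actionInf (hs : 0 ≤ s)
    (hp : IsAdmissible cfg x S N p) (hmin : pathAction s N p = actionInf cfg s x S) :
    IsActionMinimizer (cfg : Set Pt) s x S p where
  isAdmissibleSeq := isAdmissible_iff_isAdmissibleSeq.1 hp
  action_le hq :=
    hmin.trans_le (actionInf_le_pathAction hs (isAdmissible_iff_isAdmissibleSeq.2 hq))

end Plane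

/-- A minimizer cannot bypass a configuration point `z` lying too close to one
of its straight segments: if the orthogonal projection `z*` of `z` onto the line through
`x_i, x_{i+1}` lies on the closed segment between them, with `s₁ = |x_i − z*| > 0`,
`s₂ = |x_{i+1} − z*| > 0`, `h = |z − z*|`, and `B = (h²/2)(1/s₁ + 1/s₂)`, then
`2 L B + B² ≥ 2 s`. -/
theorem minimizer_no_nearby_unvisited_point (s : ℝ) (hs : 0 < s) (x : Pt) (S : Set Pt)
    (hS : S.Nonempty) (cfg : Finset Pt) (N : ℕ) (p : Fin (N + 2) → Pt)
    (hadm : IsAdmissible cfg x S N p)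
    (hmin : pathAction s N p = actionInf cfg s x S)
    (z : Pt) (hz : z ∈ cfg)
    (hznotvisited : ∀ i : Fin (N + 2), i ≠ 0 → i ≠ Fin.last (N + 1) → p i ≠ z)
    (i : Fin (N + 1)) (zstar : Pt)
    (hseg : zstar ∈ segment ℝ (p i.castSucc) (p i.succ))
    (horth : ⟪z - zstar, p i.succ - p i.castSucc⟫ = (0 : ℝ))
    (hs₁ : 0 < ‖p i.castSucc - zstar‖) (hs₂ : 0 < ‖p i.succ - zstar‖) :
    2 * pathLength N p *
        ((‖z - zstar‖ ^ 2 / 2) * (1 / ‖p i.castSucc - zstar‖ + 1 / ‖p i.succ - zstar‖)) +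
        ((‖z - zstar‖ ^ 2 / 2) * (1 / ‖p i.castSucc - zstar‖ + 1 / ‖p i.succ - zstar‖)) ^ 2 ≥
      2 * s :=
  minimizer_no_nearby_unvisited_point_general hs
    (isActionMinimizer_of_pathAction_eq_actionInf hs.le hadm hmin) hz
    (fun ⟨k, hk, hkz⟩ ↦ hznotvisited k hk.1.ne' hk.2.ne hkz) hseg horth hs₁ hs₂
end
end
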